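/- If the nonnegative integer n satisfies n ≢ 1, 2, 5 (mod 8), then the overpartition number satisfies p̄(4n) ≡ (−1)ⁿ p̄(n) (mod 64). -/

import Mathlib

/-!
Write `φ(q) = ∑_{k ∈ ℤ} q^(k²)`. Gauss's identity gives `∑ p̄(n) (-q)ⁿ = 1 / φ(q)`
(`overpartitionSeries_mul`). Splitting off the odd squares, `φ(q) = φ(q⁴) + 2T(q)` where `T` is the
sum of `q^(k²)` over odd `k > 0`. Put `P(q) = 1 / φ(q)` and `p = P(q⁴)`; then
`P = ∑_{j < 6} (-2)ʲ Tʲ p^(j + 1) + 64 T⁶ p⁶ P`. As `Tʲ` only has exponents congruent to `j`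
modulo `4`, comparing coefficients of `q^(4n)` gives
`p̄(4n) ≡ (-1)ⁿ p̄(n) + 16 [q^(4n)] T⁴ p⁵ (mod 64)`.

It remains to see that `4` divides `[q^(4n)] T⁴ p⁵` (`four_dvd_coeff`). Since `f(q)² ≡ f(q²) (mod 2)`,
one has `T⁴ ≡ T(q²)² (mod 4)` and `T(q²)² ≡ T(q⁴) (mod 2)`, while `p⁵ ≡ φ(q⁴) = 1 + 2S(q⁴) (mod 4)`
with `S` the sum over all positive squares. Hence `T⁴ p⁵ ≡ T(q²)² + 2 T(q⁴) S(q⁴) (mod 4)`. The first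
term only has exponents congruent to `4` modulo `16`, so it contributes only for
`n ≡ 1, 5 (mod 8)`; the second contributes only if `n` is an odd square plus a square, which forces
`n ≡ 1, 2, 5 (mod 8)`.

Gauss's identity is obtained from the finite identity
`∑_{|j| ≤ n} (-1)ʲ q^(j²) [2n, n + j]_{q²} = ∏_{i < n} (1 - q^(2i + 1))²` (`sum_gaussBinom`), a case
of the `q`-binomial theorem, by letting `n → ∞` in the sense of working modulo `q^M` for each `M`.
-/

/-- The number of overpartitions of `n`: pairs `(μ, λ)` where `μ` is a partition of some
`m ≤ n` into distinct parts and `λ` is a partition of `n - m`. -/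
def overpartition (n : ℕ) : ℕ :=
  ∑ m ∈ Finset.range (n + 1),
    (Nat.Partition.distincts m).card * Fintype.card (Nat.Partition (n - m))

open PowerSeries

/-! ### The q-binomial theorem -/

/-- The `q`-Pochhammer symbol `(Q; Q)_n = ∏_{i = 1}^{n} (1 - Qⁱ)`. -/
def qPoch {R : Type*} [CommRing R] (Q : R) (n : ℕ) : R := ∏ i ∈ Finset.range n, (1 - Q ^ (i + 1))

/-- The Gaussian binomial coefficient `[a + b, a]_Q`, indexed by its two lower entries `a` and `b` and
defined through the `q`-Pascal recursion. -/
def gaussBinom {R : Type*} [CommRing R] (Q : R) : ℕ → ℕ → R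
  | _, 0 => 1
  | 0, _ + 1 => 1
  | a + 1, b + 1 => Q ^ (b + 1) * gaussBinom Q a (b + 1) + gaussBinom Q (a + 1) b

/-- The product formula `[a + b, a]_Q = (Q; Q)_(a + b) / ((Q; Q)_a (Q; Q)_b)`, free of division. -/
lemma gaussBinom_mul_qPoch {R : Type*} [CommRing R] (Q : R) (a b : ℕ) :
    gaussBinom Q a b * qPoch Q a * qPoch Q b = qPoch Q (a + b) := by
  induction a, b using gaussBinom.induct with
  | case1 a => simp [gaussBinom, qPoch]
  | case2 b => simp [gaussBinom, qPoch]
  | case3 a b ih1 ih2 =>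
    have s (n : ℕ) : qPoch Q (n + 1) = qPoch Q n * (1 - Q ^ (n + 1)) := Finset.prod_range_succ _ _
    rw [show a + 1 + b = a + b + 1 by ring] at ih2
    rw [show a + (b + 1) = a + b + 1 by ring] at ih1
    rw [show a + 1 + (b + 1) = a + b + 1 + 1 by ring, s (a + b + 1), s a, s b, gaussBinom]
    rw [s b] at ih1
    rw [s a] at ih2
    linear_combination Q ^ (b + 1) * (1 - Q ^ (a + 1)) * ih1 + (1 - Q ^ (b + 1)) * ih2

lemma gaussBinom_zero_left {R : Type*} [CommRing R] (Q : R) (b : ℕ) : gaussBinom Q 0 b = 1 := by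
  cases b <;> simp [gaussBinom]

lemma gaussBinom_zero_right {R : Type*} [CommRing R] (Q : R) (b : ℕ) : gaussBinom Q b 0 = 1 := by
  cases b <;> simp [gaussBinom]

lemma map_gaussBinom {R S : Type*} [CommRing R] [CommRing S] (f : R →+* S) (Q : R) (a b : ℕ) :
    f (gaussBinom Q a b) = gaussBinom (f Q) a b := by
  induction a, b using gaussBinom.induct with
  | case1 a => simp [gaussBinom]
  | case2 b => simp [gaussBinom]
  | case3 a b ih1 ih2 => simp [gaussBinom, ih1, ih2]

/-- The `q`-binomial theorem, homogenized so that a negative power of `Q` is never substituted. -/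
lemma prod_add_mul_pow {R : Type*} [CommRing R] (Q x y : R) (N : ℕ) :
    ∏ i ∈ Finset.range N, (x + y * Q ^ i) = ∑ p ∈ Finset.HasAntidiagonal.antidiagonal N,
      Q ^ (p.1.choose 2) * gaussBinom Q p.1 p.2 * y ^ p.1 * x ^ p.2 := by
  induction N with
  | zero => simp [gaussBinom]
  | succ N ih =>
    let T : ℕ × ℕ → R := fun p ↦ Q ^ (p.1.choose 2) * gaussBinom Q p.1 p.2 * y ^ p.1 * x ^ p.2
    -- `T (a, b)` is the summand; `U` and `V` shift it in the first and in the second index.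
    let U : ℕ × ℕ → R := fun p ↦ match p with
      | (0, _) => 0
      | (a + 1, b) => T (a, b)
    let V : ℕ × ℕ → R := fun p ↦ match p with
      | (_, 0) => 0
      | (a, b + 1) => T (a, b)
    have hU : ∑ p ∈ Finset.HasAntidiagonal.antidiagonal (N + 1), U p = ∑ p ∈ Finset.HasAntidiagonal.antidiagonal N, T p := by
      rw [Finset.Nat.sum_antidiagonal_succ]; simp [U]
    have hV : ∑ p ∈ Finset.HasAntidiagonal.antidiagonal (N + 1), V p = ∑ p ∈ Finset.HasAntidiagonal.antidiagonal N, T p := by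
      rw [Finset.Nat.sum_antidiagonal_succ']; simp [V]
    have hT : ∀ p ∈ Finset.HasAntidiagonal.antidiagonal (N + 1), T p = y * Q ^ N * U p + x * V p := by
      rintro ⟨_ | a, _ | b⟩ h <;> rw [Finset.HasAntidiagonal.mem_antidiagonal] at h <;> simp only at h
      · omega
      · simp [U, V, T, gaussBinom_zero_left]; ring
      · obtain rfl : a = N := by omega
        simp [U, V, T, gaussBinom_zero_right, Nat.choose_succ_succ' a 1]; ring
      · obtain rfl : N = a + b + 1 := by omega
        simp only [U, V, T, gaussBinom, Nat.choose_succ_succ' a 1, Nat.choose_one_right]; ring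
    rw [Finset.prod_range_succ, ih]
    change (∑ p ∈ Finset.HasAntidiagonal.antidiagonal N, T p) * _ = ∑ p ∈ Finset.HasAntidiagonal.antidiagonal (N + 1), T p
    rw [Finset.sum_congr rfl hT, Finset.sum_add_distrib, ← Finset.mul_sum, ← Finset.mul_sum, hU, hV]
    ring

/-! ### Gauss's identity modulo a power of the variable -/

/-- The `q`-Pochhammer symbol `(q; q²)_n = ∏_{i < n} (1 - q^(2i + 1))`. -/
def oddPoch {R : Type*} [CommRing R] (q : R) (n : ℕ) : R :=
  ∏ i ∈ Finset.range n, (1 - q ^ (2 * i + 1))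

/-- The finite form of Gauss's identity: the `q`-binomial theorem with `Q = q²`, `x = q^(2n - 1)`,
`y = -1`, divided by a power of `q`. The index `p.1` stands for `n + j` with `|j| ≤ n`. -/
lemma sum_gaussBinom (n : ℕ) :
    ∑ p ∈ Finset.HasAntidiagonal.antidiagonal (2 * n), (-1) ^ p.1 * (X : ℤ⟦X⟧) ^ ((p.1 - n : ℤ).natAbs ^ 2) *
      gaussBinom (X ^ 2) p.1 p.2 = (-1) ^ n * oddPoch X n ^ 2 := by
  obtain _ | m := n
  · simp [gaussBinom, oddPoch]
  have key := prod_add_mul_pow ((X : ℤ⟦X⟧) ^ 2) (X ^ (2 * m + 1)) (-1) (2 * (m + 1))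
  -- Each half of the `2 (m + 1)` factors yields one copy of `oddPoch X (m + 1)`.
  have h1 : ∏ i ∈ Finset.range (m + 1), ((X : ℤ⟦X⟧) ^ (2 * m + 1) + (-1) * (X ^ 2) ^ i) =
      (-1) ^ (m + 1) * X ^ (m * (m + 1)) * oddPoch X (m + 1) := by
    have : ∀ i ∈ Finset.range (m + 1), ((X : ℤ⟦X⟧) ^ (2 * m + 1) + (-1) * (X ^ 2) ^ i) =
        (-1) * (X ^ i) ^ 2 * (1 - X ^ (2 * (m + 1 - 1 - i) + 1)) := by
      intro i hi
      rw [Finset.mem_range] at hi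
      obtain ⟨d, rfl⟩ : ∃ d, m = i + d := ⟨m - i, by omega⟩
      rw [show i + d + 1 - 1 - i = d by omega]
      ring
    rw [Finset.prod_congr rfl this, Finset.prod_mul_distrib, Finset.prod_mul_distrib,
      Finset.prod_range_reflect (fun i ↦ (1 - (X : ℤ⟦X⟧) ^ (2 * i + 1))), Finset.prod_pow,
      Finset.prod_pow_eq_pow_sum, ← pow_mul, Finset.sum_range_id_mul_two]
    simp [oddPoch, mul_comm]
  have h2 : ∏ i ∈ Finset.range (m + 1),
      ((X : ℤ⟦X⟧) ^ (2 * m + 1) + (-1) * (X ^ 2) ^ (m + 1 + i)) =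
      X ^ ((2 * m + 1) * (m + 1)) * oddPoch X (m + 1) := by
    have : ∀ i ∈ Finset.range (m + 1), ((X : ℤ⟦X⟧) ^ (2 * m + 1) + (-1) * (X ^ 2) ^ (m + 1 + i)) =
        X ^ (2 * m + 1) * (1 - X ^ (2 * i + 1)) := by
      intro i hi
      ring
    rw [Finset.prod_congr rfl this, Finset.prod_mul_distrib]
    simp [oddPoch, pow_mul]
  rw [show 2 * (m + 1) = (m + 1) + (m + 1) by ring, Finset.prod_range_add, h1, h2] at key
  have hX : (X : ℤ⟦X⟧) ^ (m * (m + 1) + (2 * m + 1) * (m + 1)) ≠ 0 := pow_ne_zero _ X_ne_zero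
  apply mul_left_cancel₀ hX
  rw [Finset.mul_sum]
  trans ∑ p ∈ Finset.HasAntidiagonal.antidiagonal (m + 1 + (m + 1)),
      ((X : ℤ⟦X⟧) ^ 2) ^ p.1.choose 2 * gaussBinom (X ^ 2) p.1 p.2 * (-1) ^ p.1 *
        (X ^ (2 * m + 1)) ^ p.2
  · rw [show 2 * (m + 1) = (m + 1) + (m + 1) by ring]
    refine Finset.sum_congr rfl fun p hp ↦ ?_
    rw [Finset.HasAntidiagonal.mem_antidiagonal] at hp
    have : m * (m + 1) + (2 * m + 1) * (m + 1) + ((p.1 - (m + 1 : ℕ) : ℤ).natAbs ^ 2) =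
        2 * p.1.choose 2 + (2 * m + 1) * p.2 := by
      have e : 2 * p.1.choose 2 + p.1 = p.1 * p.1 := by
        rw [Nat.choose_two_right, Nat.mul_div_cancel' (Nat.even_mul_pred_self _).two_dvd]
        cases p.1 <;> simp; ring
      zify at e hp ⊢
      rw [sq_abs]
      obtain h : (p.2 : ℤ) = 2 * m + 2 - p.1 := by linarith
      rw [h]
      linear_combination -e
    rw [← pow_mul, ← pow_mul,
      show ((X : ℤ⟦X⟧) ^ (2 * p.1.choose 2) * gaussBinom (X ^ 2) p.1 p.2 * (-1) ^ p.1 *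
        X ^ ((2 * m + 1) * p.2)) = X ^ (2 * p.1.choose 2 + (2 * m + 1) * p.2) *
          (gaussBinom (X ^ 2) p.1 p.2 * (-1) ^ p.1) by ring, ← this]
    ring
  · rw [← key]; ring

section Nilpotent

variable {A : Type*} [CommRing A] {x : A} {M : ℕ}

/-- Modulo `x ^ M` the product `(x; x)_k` has already reached its limit at `k = M`. -/
lemma qPoch_eq_of_le (hx : x ^ M = 0) {k : ℕ} (hk : M ≤ k) : qPoch x k = qPoch x M := by
  obtain ⟨d, rfl⟩ := Nat.exists_eq_add_of_le hk
  rw [qPoch, Finset.prod_range_add, Finset.prod_eq_one (s := Finset.range d), mul_one, qPoch]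
  intro i _
  rw [show M + i + 1 = M + (i + 1) by ring, pow_add, hx]
  ring

lemma isUnit_qPoch (hx : x ^ M = 0) (k : ℕ) : IsUnit (qPoch x k) := by
  rw [qPoch, IsUnit.prod_iff]
  intro i _
  exact (IsNilpotent.pow_of_pos ⟨M, hx⟩ (by omega)).isUnit_one_sub

lemma qPoch_sq_mul_oddPoch (x : A) (n : ℕ) :
    qPoch (x ^ 2) n * oddPoch x n = qPoch x (2 * n) := by
  induction n with
  | zero => simp [qPoch, oddPoch]
  | succ n ih =>
    rw [show 2 * (n + 1) = 2 * n + 1 + 1 by ring]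
    simp only [qPoch, oddPoch] at ih ⊢
    rw [Finset.prod_range_succ, Finset.prod_range_succ, Finset.prod_range_succ,
      Finset.prod_range_succ, ← ih]
    ring

lemma qPoch_sq (x : A) (n : ℕ) :
    qPoch (x ^ 2) n = qPoch x n * ∏ i ∈ Finset.range n, (1 + x ^ (i + 1)) := by
  rw [qPoch, qPoch, ← Finset.prod_mul_distrib]
  refine Finset.prod_congr rfl fun i _ ↦ ?_
  ring

/-- Modulo `x ^ M` a Gaussian binomial with large entries equals the inverse of the limit of
`(x; x)_n`. -/
lemma gaussBinom_mul_qPoch_of_nilpotent (hx : x ^ M = 0) {a b : ℕ} (ha : M ≤ a) (hb : M ≤ b) :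
    gaussBinom x a b * qPoch x M = 1 := by
  have h := gaussBinom_mul_qPoch x a b
  rw [qPoch_eq_of_le hx ha, qPoch_eq_of_le hx hb, qPoch_eq_of_le hx (show M ≤ a + b by omega)] at h
  apply (isUnit_qPoch hx M).mul_right_cancel
  rw [h, one_mul]

/-- The two-sided sum of `(-1)ʲ x^(j²)` over `|j| ≤ n`, folded to the positive indices. -/
lemma sum_antidiagonal_sq (x : A) (n : ℕ) :
    ∑ p ∈ Finset.HasAntidiagonal.antidiagonal (2 * n),
      (-1) ^ p.1 * x ^ ((p.1 - n : ℤ).natAbs ^ 2) =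
    (-1) ^ n * (1 + 2 * ∑ j ∈ Finset.range n, (-1) ^ (j + 1) * x ^ ((j + 1) ^ 2)) := by
  rw [Finset.Nat.sum_antidiagonal_eq_sum_range_succ
    (fun a _ ↦ (-1) ^ a * x ^ ((a - n : ℤ).natAbs ^ 2)),
    show (2 * n).succ = n + (1 + n) by omega, Finset.sum_range_add, Finset.sum_range_add,
    ← Finset.sum_range_reflect]
  have e1 : ∀ j ∈ Finset.range n, (-1 : A) ^ (n - 1 - j) *
      x ^ (((n - 1 - j : ℕ) - n : ℤ).natAbs ^ 2) =
      (-1) ^ n * ((-1) ^ (j + 1) * x ^ ((j + 1) ^ 2)) := by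
    intro j hj
    rw [Finset.mem_range] at hj
    obtain ⟨d, rfl⟩ : ∃ d, n = j + 1 + d := ⟨n - 1 - j, by omega⟩
    rw [show j + 1 + d - 1 - j = d by omega,
      show ((d : ℤ) - (j + 1 + d : ℕ)).natAbs = j + 1 by omega, pow_add _ (j + 1) d,
      show ((-1 : A) ^ (j + 1) * (-1) ^ d) * ((-1) ^ (j + 1) * x ^ (j + 1) ^ 2) =
        ((-1) ^ (j + 1)) ^ 2 * ((-1) ^ d * x ^ (j + 1) ^ 2) by ring, ← pow_mul, mul_comm (j + 1) 2]
    simp [pow_mul]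
  have e2 : ∀ j ∈ Finset.range n, (-1 : A) ^ (n + (1 + j)) *
      x ^ (((n + (1 + j) : ℕ) - n : ℤ).natAbs ^ 2) =
      (-1) ^ n * ((-1) ^ (j + 1) * x ^ ((j + 1) ^ 2)) := by
    intro j _
    rw [show (((n + (1 + j) : ℕ) : ℤ) - n).natAbs = j + 1 by omega]
    ring
  rw [Finset.sum_congr rfl e1, Finset.sum_congr rfl e2, ← Finset.mul_sum]
  simp
  ring

lemma map_oddPoch {R S : Type*} [CommRing R] [CommRing S] (f : R →+* S) (q : R) (n : ℕ) :
    f (oddPoch q n) = oddPoch (f q) n := by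
  simp [oddPoch]

/-- Gauss's identity `φ(-q) = (q²; q²)_∞ (q; q²)_∞²` modulo a power of `q`, phrased as the image
under a ring homomorphism that makes `X` nilpotent. -/
lemma gauss_of_nilpotent (π : ℤ⟦X⟧ →+* A) (hx : π X ^ M = 0) {n : ℕ} (hn : 2 * M ≤ n) :
    qPoch (π X ^ 2) n * oddPoch (π X) n ^ 2 =
      1 + 2 * ∑ j ∈ Finset.range n, (-1) ^ (j + 1) * π X ^ ((j + 1) ^ 2) := by
  generalize hxX : π X = x at hx ⊢
  have hx2 : (x ^ 2) ^ M = 0 := by rw [← pow_mul, mul_comm, pow_mul, hx]; simp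
  have h := congrArg π (sum_gaussBinom n)
  simp only [map_sum, map_mul, map_pow, map_neg, map_one, map_gaussBinom, map_oddPoch, hxX] at h
  have hsum := sum_antidiagonal_sq x n
  have hs : ∑ p ∈ Finset.HasAntidiagonal.antidiagonal (2 * n),
      (-1) ^ p.1 * x ^ ((p.1 - n : ℤ).natAbs ^ 2) =
      qPoch (x ^ 2) n * ∑ p ∈ Finset.HasAntidiagonal.antidiagonal (2 * n),
        (-1) ^ p.1 * x ^ ((p.1 - n : ℤ).natAbs ^ 2) * gaussBinom (x ^ 2) p.1 p.2 := by
    rw [Finset.mul_sum]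
    refine Finset.sum_congr rfl fun p hp ↦ ?_
    rw [Finset.HasAntidiagonal.mem_antidiagonal] at hp
    -- Either `j² ≥ M` and the term vanishes, or both entries of the binomial are at least `M`.
    by_cases hM : M ≤ (p.1 - n : ℤ).natAbs
    · obtain ⟨d, hd⟩ := Nat.exists_eq_add_of_le (hM.trans (Nat.le_self_pow two_ne_zero _))
      rw [hd, pow_add, hx]
      ring
    · have := gaussBinom_mul_qPoch_of_nilpotent hx2 (show M ≤ p.1 by omega) (show M ≤ p.2 by omega)
      rw [qPoch_eq_of_le hx2 (show M ≤ n by omega)]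
      linear_combination -(-1) ^ p.1 * x ^ ((p.1 - n : ℤ).natAbs ^ 2) * this
  rw [h, hsum] at hs
  have h1 : ((-1 : A) ^ n) * (-1) ^ n = 1 := by rw [← mul_pow]; simp
  linear_combination (-1) ^ n * (-hs) + (qPoch (x ^ 2) n * oddPoch x n ^ 2 -
    (1 + 2 * ∑ j ∈ Finset.range n, (-1) ^ (j + 1) * x ^ ((j + 1) ^ 2))) * (-h1)

end Nilpotent

/-! ### The generating function of overpartitions -/

/-- The series `S = ∑_{k ≥ 1} q^(k²)`, so that `φ = 1 + 2 * S`. -/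
noncomputable def posSquares : ℤ⟦X⟧ := .mk fun m ↦ if m ≠ 0 ∧ IsSquare m then 1 else 0

lemma X_pow_dvd_posSquares_sub {M n : ℕ} (h : M ≤ n) :
    X ^ M ∣ posSquares - ∑ j ∈ Finset.range n, X ^ ((j + 1) ^ 2) := by
  rw [X_pow_dvd_iff]
  intro m hm
  rw [map_sub, map_sum, posSquares, coeff_mk]
  simp only [coeff_X_pow]
  split_ifs with hs
  · obtain ⟨h0, r, rfl⟩ := hs
    obtain _ | r := r
    · simp at h0
    rw [Finset.sum_eq_single r]
    · rw [if_pos (by ring)]; ring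
    · intro b _ hb
      rw [if_neg]
      intro h
      have : r + 1 = b + 1 := Nat.pow_left_injective two_ne_zero (by simp only; rw [← h]; ring)
      omega
    · intro hr
      exfalso; apply hr
      rw [Finset.mem_range]
      nlinarith
  · rw [Finset.sum_eq_zero, sub_zero]
    intro j _
    rw [if_neg]
    rintro rfl
    exact hs ⟨by positivity, j + 1, by ring⟩

/-- The generating function of the partition numbers. -/
noncomputable def partitionSeries : ℤ⟦X⟧ := .mk fun n ↦ (Fintype.card (Nat.Partition n) : ℤ)

/-- The generating function of the numbers of partitions into distinct parts. -/
noncomputable def distinctSeries : ℤ⟦X⟧ := .mk fun n ↦ ((Nat.Partition.distincts n).card : ℤ)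

/-- The generating function of the overpartition numbers. -/
noncomputable def overpartitionSeries : ℤ⟦X⟧ := .mk fun n ↦ (overpartition n : ℤ)

lemma overpartitionSeries_eq : overpartitionSeries = distinctSeries * partitionSeries := by
  ext n
  rw [coeff_mul, Finset.Nat.sum_antidiagonal_eq_sum_range_succ
    (fun a b ↦ coeff a distinctSeries * coeff b partitionSeries)]
  simp [overpartitionSeries, overpartition, distinctSeries, partitionSeries]

open Filter in
/-- Convergence of an infinite product of power series, for the discrete topology on `ℤ`, says that
the partial products are eventually correct modulo any power of `X`. -/
lemma eventually_dvd_of_hasProd {f : ℕ → ℤ⟦X⟧} {g : ℤ⟦X⟧}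
    (h : let _ : TopologicalSpace ℤ := ⊥
      let _ := WithPiTopology.instTopologicalSpace ℤ
      HasProd f g) (M : ℕ) :
    ∀ᶠ N in atTop, X ^ M ∣ g - ∏ i ∈ Finset.range N, f i := by
  let _ : TopologicalSpace ℤ := ⊥
  have : DiscreteTopology ℤ := ⟨rfl⟩
  let _ := WithPiTopology.instTopologicalSpace ℤ
  have h1 := HasProd.tendsto_prod_nat h
  rw [WithPiTopology.tendsto_iff_coeff_tendsto] at h1
  have h2 : ∀ᶠ N in atTop, ∀ m ∈ Finset.range M, coeff m (∏ i ∈ Finset.range N, f i) = coeff m g := by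
    rw [Finset.eventually_all]
    intro m _
    have := h1 m
    rw [nhds_discrete] at this
    simpa using this
  filter_upwards [h2] with N hN
  rw [X_pow_dvd_iff]
  intro m hm
  rw [map_sub, hN m (by simpa using hm), sub_self]

open Filter in
lemma eventually_dvd_distinctSeries (M : ℕ) :
    ∀ᶠ N in atTop, X ^ M ∣ distinctSeries - ∏ i ∈ Finset.range N, (1 + X ^ (i + 1)) := by
  apply eventually_dvd_of_hasProd
  let _ : TopologicalSpace ℤ := ⊥
  have : DiscreteTopology ℤ := ⟨rfl⟩
  have := Nat.Partition.hasProd_powerSeriesMk_card_countRestricted ℤ (m := 2) (by norm_num)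
  simpa [Finset.sum_range_succ, Nat.Partition.countRestricted_two, distinctSeries] using this

open Filter in
lemma eventually_dvd_partitionSeries (M : ℕ) :
    ∀ᶠ N in atTop, X ^ M ∣ partitionSeries * qPoch X N - 1 := by
  let _ : TopologicalSpace ℤ := ⊥
  have : DiscreteTopology ℤ := ⟨rfl⟩
  let _ := WithPiTopology.instTopologicalSpace ℤ
  have h := Nat.Partition.hasProd_powerSeriesMk_card_restricted ℤ (fun _ ↦ True)
  simp only [if_true] at h
  have hp : (PowerSeries.mk fun n ↦ ((Nat.Partition.restricted n fun _ ↦ True).card : ℤ)) =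
      partitionSeries := by
    ext n
    simp [partitionSeries, Nat.Partition.restricted]
  rw [hp] at h
  filter_upwards [eventually_dvd_of_hasProd h M] with N hN
  have : (∏ i ∈ Finset.range N, ∑' j : ℕ, (X : ℤ⟦X⟧) ^ ((i + 1) * j)) * qPoch X N = 1 := by
    rw [qPoch, ← Finset.prod_mul_distrib]
    refine Finset.prod_eq_one fun i _ ↦ ?_
    simp_rw [pow_mul]
    exact WithPiTopology.tsum_pow_mul_one_sub_of_constantCoeff_eq_zero (by simp)
  rw [← this, ← sub_mul]
  exact hN.mul_right _

/-- Gauss's identity: `∑ p̄(n) qⁿ` is the inverse of `φ(-q) = ∑_{k ∈ ℤ} (-1)ᵏ q^(k²)`. -/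
theorem overpartitionSeries_mul : overpartitionSeries * evalNegHom (1 + 2 * posSquares) = 1 := by
  have key : ∀ M, X ^ M ∣ overpartitionSeries * evalNegHom (1 + 2 * posSquares) - 1 := by
    intro M
    obtain ⟨n, ⟨hd, hp⟩, hn⟩ := ((eventually_dvd_distinctSeries M).and
      (eventually_dvd_partitionSeries M)).and (Filter.eventually_ge_atTop (2 * M)) |>.exists
    let π := Ideal.Quotient.mk (Ideal.span {(X : ℤ⟦X⟧) ^ M})
    have hπ {f : ℤ⟦X⟧} : X ^ M ∣ f ↔ π f = 0 := by
      rw [Ideal.Quotient.eq_zero_iff_mem, Ideal.mem_span_singleton]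
    have hx : π X ^ M = 0 := by rw [← map_pow, ← hπ]
    have hq : π (qPoch X n) = qPoch (π X) n := by simp [qPoch]
    obtain ⟨c, hc⟩ := X_pow_dvd_posSquares_sub (show M ≤ n by omega)
    have hS : π (evalNegHom posSquares) =
        ∑ j ∈ Finset.range n, (-1) ^ (j + 1) * π X ^ ((j + 1) ^ 2) := by
      rw [sub_eq_iff_eq_add] at hc
      rw [hc, map_add, map_mul, map_pow, evalNegHom_X, neg_pow, map_add, map_mul, map_mul,
        map_pow π X M, hx, mul_zero, zero_mul, zero_add, map_sum, map_sum]
      refine Finset.sum_congr rfl fun j _ ↦ ?_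
      have hs : (-1 : ℤ⟦X⟧) ^ ((j + 1) ^ 2) = (-1) ^ (j + 1) :=
        neg_one_pow_congr (Nat.even_pow' two_ne_zero)
      rw [map_pow, evalNegHom_X, neg_pow, hs, map_mul, map_pow, map_pow, map_neg, map_one]
    have hg := gauss_of_nilpotent π hx hn
    rw [hπ, map_sub, map_one] at hp ⊢
    rw [hπ, map_sub] at hd
    rw [sub_eq_zero] at *
    rw [map_mul, hq] at hp
    rw [overpartitionSeries_eq, map_mul, map_mul, hd, map_add evalNegHom, map_add π, map_mul evalNegHom,
      map_mul π, hS]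
    simp only [map_one, map_ofNat]
    rw [← hg]
    have h1 := qPoch_sq_mul_oddPoch (π X) n
    have h2 := qPoch_sq (π X) n
    rw [qPoch_eq_of_le hx (show M ≤ 2 * n by omega),
      ← qPoch_eq_of_le hx (show M ≤ n by omega)] at h1
    simp only [map_prod, map_add, map_one, map_pow]
    -- In the quotient, `p w = 1`, `u o = w` and `u = w e`, whence `p e (u o²) = e o = 1`.
    set e := ∏ i ∈ Finset.range n, (1 + π X ^ (i + 1))
    set w := qPoch (π X) n
    set o := oddPoch (π X) n
    set u := qPoch (π X ^ 2) n
    have heo : e * o = 1 := by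
      apply (isUnit_qPoch hx n).mul_left_cancel
      linear_combination h1 - o * h2
    linear_combination e * o * π partitionSeries * h1 + e * o * hp + heo
  ext m
  have := (X_pow_dvd_iff.1 (key (m + 1))) m (by omega)
  rwa [map_sub, sub_eq_zero] at this

/-! ### Dissection modulo 4 and reduction modulo 64 -/

/-- The series `T = ∑ q^(k²)` over odd `k > 0`. -/
noncomputable def oddSquares : ℤ⟦X⟧ := .mk fun m ↦ if Odd m ∧ IsSquare m then 1 else 0

/-- `S(q) = T(q) + S(q⁴)`: a square is odd or four times a square. -/
lemma posSquares_eq : posSquares = oddSquares + expand 4 four_ne_zero posSquares := by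
  ext m
  simp only [map_add, coeff_expand, posSquares, oddSquares, coeff_mk]
  by_cases h4 : 4 ∣ m
  · obtain ⟨k, rfl⟩ := h4
    have h1 : ¬ Odd (4 * k) := by rw [Nat.not_odd_iff_even]; exact ⟨2 * k, by ring⟩
    have h2 : IsSquare (4 * k) ↔ IsSquare k := by
      constructor
      · rintro ⟨r, hr⟩
        obtain ⟨t, rfl⟩ : 2 ∣ r := by
          have : 2 ∣ r * r := ⟨2 * k, by rw [← hr]; ring⟩
          simpa [Nat.prime_two.dvd_mul] using this
        exact ⟨t, by nlinarith⟩
      · rintro ⟨r, rfl⟩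
        exact ⟨2 * r, by ring⟩
    simp [h1, h2]
  · have h1 : IsSquare m → Odd m := by
      rintro ⟨r, rfl⟩
      by_contra h
      rw [Nat.not_odd_iff_even, Nat.even_mul, or_self] at h
      obtain ⟨t, rfl⟩ := h
      exact h4 ⟨t * t, by ring⟩
    have h0 : m ≠ 0 := by rintro rfl; simp at h4
    by_cases hs : IsSquare m
    · simp [hs, h1 hs, h4, h0]
    · simp [hs, h4]

/-- All exponents that occur in `f` are congruent to `c` modulo `N`. -/
def SupportedMod (N c : ℕ) (f : ℤ⟦X⟧) : Prop := ∀ m, coeff m f ≠ 0 → m ≡ c [MOD N]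

namespace SupportedMod

variable {N c d : ℕ} {f g : ℤ⟦X⟧}

lemma mul (hf : SupportedMod N c f) (hg : SupportedMod N d g) : SupportedMod N (c + d) (f * g) := by
  intro m hm
  rw [coeff_mul] at hm
  obtain ⟨p, hp, hne⟩ := Finset.exists_ne_zero_of_sum_ne_zero hm
  rw [← Finset.HasAntidiagonal.mem_antidiagonal.1 hp]
  exact (hf _ (left_ne_zero_of_mul hne)).add (hg _ (right_ne_zero_of_mul hne))

lemma pow (hf : SupportedMod N c f) (k : ℕ) : SupportedMod N (k * c) (f ^ k) := by
  induction k with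
  | zero =>
    intro m hm
    rw [pow_zero, coeff_one] at hm
    obtain rfl : m = 0 := by by_contra h; simp [h] at hm
    simp [Nat.ModEq.refl]
  | succ k ih =>
    rw [pow_succ, Nat.succ_mul]
    exact ih.mul hf

lemma expand (hf : SupportedMod N c f) (k : ℕ) (hk : k ≠ 0) :
    SupportedMod (k * N) (k * c) (expand k hk f) := by
  intro m hm
  rw [coeff_expand] at hm
  split_ifs at hm with h
  · obtain ⟨t, rfl⟩ := h
    rw [Nat.mul_div_cancel_left _ (Nat.pos_of_ne_zero hk)] at hm
    exact (hf t hm).mul_left' k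
  · exact absurd rfl hm

lemma coeff_eq_zero (hf : SupportedMod N c f) {m : ℕ} (h : ¬ m ≡ c [MOD N]) : coeff m f = 0 :=
  not_not.1 (mt (hf m) h)

end SupportedMod

lemma supportedMod_oddSquares : SupportedMod 8 1 oddSquares := by
  intro m hm
  rw [oddSquares, coeff_mk] at hm
  obtain ⟨ho, r, rfl⟩ : Odd m ∧ IsSquare m := by by_contra h; simp [h] at hm
  have := Nat.odd_mul.1 ho
  have hr : r % 8 = 1 ∨ r % 8 = 3 ∨ r % 8 = 5 ∨ r % 8 = 7 := by
    have := Nat.odd_iff.1 this.1; omega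
  rcases hr with h | h | h | h <;> simp [Nat.ModEq, Nat.mul_mod, h]

lemma supportedMod_expand_four (f : ℤ⟦X⟧) : SupportedMod 4 0 (expand 4 four_ne_zero f) := by
  have : SupportedMod 1 0 f := fun m _ ↦ Nat.modEq_one
  simpa using this.expand 4 four_ne_zero

/-- `f(q)² ≡ f(q²)` modulo `2`, by the Frobenius map on `ZMod 2`. -/
lemma exists_sq_eq_expand_add (f : ℤ⟦X⟧) :
    ∃ u, f ^ 2 = expand 2 two_ne_zero f + 2 * u := by
  let φ := Int.castRingHom (ZMod 2)
  have h : expand 2 two_ne_zero (map φ f) = map φ f ^ 2 := by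
    have := MvPowerSeries.map_frobenius_expand (R := ZMod 2) 2 two_ne_zero (f := map φ f)
    rw [ZMod.frobenius_zmod, MvPowerSeries.map_id] at this
    exact this
  have h2 : map φ (f ^ 2 - expand 2 two_ne_zero f) = 0 := by
    rw [map_sub, map_expand, map_pow, h, sub_self]
  have h3 (m : ℕ) : (2 : ℤ) ∣ coeff m (f ^ 2 - expand 2 two_ne_zero f) := by
    have := congrArg (coeff m) h2
    rw [coeff_map, map_zero] at this
    exact (ZMod.intCast_zmod_eq_zero_iff_dvd _ 2).1 this
  choose u hu using h3
  refine ⟨.mk u, ?_⟩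
  rw [← sub_eq_iff_eq_add']
  ext m
  rw [hu, ← map_ofNat (C (R := ℤ)) 2, coeff_C_mul, coeff_mk]

/-- An odd square plus a square is congruent to `1`, `2` or `5` modulo `8`. -/
lemma coeff_oddSquares_mul_posSquares {n : ℕ} (h1 : n % 8 ≠ 1) (h2 : n % 8 ≠ 2)
    (h5 : n % 8 ≠ 5) : coeff n (oddSquares * posSquares) = 0 := by
  rw [coeff_mul]
  refine Finset.sum_eq_zero fun ⟨a, b⟩ hp ↦ ?_
  rw [Finset.HasAntidiagonal.mem_antidiagonal] at hp
  by_contra h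
  have ha : a % 8 = 1 := supportedMod_oddSquares a (left_ne_zero_of_mul h)
  have hb := right_ne_zero_of_mul h
  rw [posSquares, coeff_mk] at hb
  obtain ⟨-, r, rfl⟩ : b ≠ 0 ∧ IsSquare b := by by_contra h; simp [h] at hb
  have hr : r * r % 8 = 0 ∨ r * r % 8 = 1 ∨ r * r % 8 = 4 := by
    rw [Nat.mul_mod]
    have : r % 8 < 8 := Nat.mod_lt _ (by norm_num)
    interval_cases r % 8 <;> simp
  simp only at hp
  omega

/-- With `p` the inverse of `φ(q⁴)`, this rests on
`T⁴ p⁵ ≡ T(q²)² + 2 T(q⁴) S(q⁴) (mod 4)`. -/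
lemma four_dvd_coeff {n : ℕ} (h1 : n % 8 ≠ 1) (h2 : n % 8 ≠ 2) (h5 : n % 8 ≠ 5) {p : ℤ⟦X⟧}
    (hp : p * expand 4 four_ne_zero (1 + 2 * posSquares) = 1) :
    (4 : ℤ) ∣ coeff (4 * n) (oddSquares ^ 4 * p ^ 5) := by
  obtain ⟨u, hu⟩ := exists_sq_eq_expand_add oddSquares
  have hD := congrArg (expand 2 two_ne_zero) hu
  rw [map_pow, map_add, map_mul, ← expand_mul] at hD
  have hD0 : coeff (4 * n) (expand 2 two_ne_zero oddSquares ^ 2) = 0 := by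
    refine ((supportedMod_oddSquares.expand 2 two_ne_zero).pow 2).coeff_eq_zero ?_
    intro h
    have : (4 * n) % 16 = 4 := h
    omega
  have hE : coeff (4 * n) (expand 4 four_ne_zero oddSquares * expand 4 four_ne_zero posSquares) =
      0 := by
    rw [← map_mul, coeff_expand_mul, coeff_oddSquares_mul_posSquares h1 h2 h5]
  simp only [map_add, map_mul, map_one, map_ofNat] at hp hD
  simp only [Nat.reduceMul] at hD
  set s := expand 4 four_ne_zero posSquares
  set D := expand 2 two_ne_zero oddSquares
  set E := expand 4 four_ne_zero oddSquares
  set u' := expand 2 two_ne_zero u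
  obtain ⟨v, hv⟩ : ∃ v, p ^ 5 = 1 + 2 * s + 4 * v := by
    have e1 : p = 1 + 2 * s + 4 * (s ^ 2 * p - s) := by linear_combination (1 - 2 * s) * hp
    have e2 : p ^ 2 = 1 + 4 * (s ^ 2 * p ^ 2 - s * p) := by
      linear_combination (p * (1 + 2 * s) + 1 - 4 * s * p) * hp
    refine ⟨s ^ 2 * p - s + p * (2 * (s ^ 2 * p ^ 2 - s * p) + 4 * (s ^ 2 * p ^ 2 - s * p) ^ 2), ?_⟩
    linear_combination e1 + p * (p ^ 2 + 1 + 4 * (s ^ 2 * p ^ 2 - s * p)) * e2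
  have key : oddSquares ^ 4 * p ^ 5 = D ^ 2 + 2 * (E * s) + 4 *
      (u' * s + D ^ 2 * v + (u * D + u ^ 2) * p ^ 5) := by
    rw [show oddSquares ^ 4 = (oddSquares ^ 2) ^ 2 by ring, hu]
    linear_combination D ^ 2 * hv + 2 * s * hD
  rw [key, ← map_ofNat (C (R := ℤ)) 2, ← map_ofNat (C (R := ℤ)) 4, map_add, map_add,
    coeff_C_mul, coeff_C_mul, hD0, hE]
  simp

theorem overpartition_four_mul_mod_64 (n : ℕ)
    (h1 : n % 8 ≠ 1) (h2 : n % 8 ≠ 2) (h5 : n % 8 ≠ 5) :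
    (overpartition (4 * n) : ℤ) ≡ (-1) ^ n * (overpartition n : ℤ) [ZMOD 64] := by
  let P := evalNegHom overpartitionSeries
  have hP (m : ℕ) : coeff m P = (-1) ^ m * overpartition m := by
    simp [P, evalNegHom, overpartitionSeries, coeff_rescale]
  have hPφ : P * (1 + 2 * posSquares) = 1 := by
    have h := congrArg evalNegHom overpartitionSeries_mul
    rw [map_mul, map_one] at h
    convert h using 2
    simp [evalNegHom, rescale_rescale]
  have hp : expand 4 four_ne_zero P * expand 4 four_ne_zero (1 + 2 * posSquares) = 1 := by
    rw [← map_mul, hPφ, map_one]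
  have hdvd := four_dvd_coeff h1 h2 h5 hp
  have hS := posSquares_eq
  have hp0 := supportedMod_expand_four P
  have hcp : coeff (4 * n) (expand 4 four_ne_zero P) = (-1) ^ n * overpartition n := by
    rw [coeff_expand_mul, hP]
  rw [map_add, map_mul, map_one, map_ofNat] at hp
  set p := expand 4 four_ne_zero P
  set T := oddSquares
  have hT : SupportedMod 4 1 T := fun m hm ↦ (supportedMod_oddSquares m hm).of_dvd (by norm_num)
  have hz (j : ℕ) (hj : j % 4 ≠ 0) : coeff (4 * n) (T ^ j * p ^ (j + 1)) = 0 := by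
    refine ((hT.pow j).mul (hp0.pow (j + 1))).coeff_eq_zero fun h ↦ hj ?_
    have : (4 * n) % 4 = (j * 1 + (j + 1) * 0) % 4 := h
    omega
  have h : P = p - 2 * T * p * P := by
    linear_combination p * hPφ - P * hp - 2 * P * p * hS
  -- Iterating `h` six times expands `P` in powers of `2 T p`.
  have key : P = p + C (-2) * (T ^ 1 * p ^ (1 + 1)) + C 4 * (T ^ 2 * p ^ (2 + 1)) +
      C (-8) * (T ^ 3 * p ^ (3 + 1)) + C 16 * (T ^ 4 * p ^ 5) + C (-32) * (T ^ 5 * p ^ (5 + 1)) +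
      C 64 * (T ^ 6 * p ^ 6 * P) := by
    simp only [map_neg, map_ofNat]
    linear_combination (1 - 2 * T * p + (2 * T * p) ^ 2 - (2 * T * p) ^ 3 + (2 * T * p) ^ 4 -
      (2 * T * p) ^ 5) * h
  have hc := congrArg (coeff (4 * n)) key
  simp only [map_add, coeff_C_mul] at hc
  rw [hz 1 (by norm_num), hz 2 (by norm_num), hz 3 (by norm_num), hz 5 (by norm_num), hP, hcp,
    Even.neg_one_pow ⟨2 * n, by ring⟩, one_mul] at hc
  obtain ⟨w, hw⟩ := hdvd
  rw [hw] at hc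
  refine (Int.modEq_iff_dvd.2 ⟨w + coeff (4 * n) (T ^ 6 * p ^ 6 * P), ?_⟩).symm
  rw [hc]
  ring
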